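/- Let G be a finite non-cyclic nilpotent group whose order is not a prime power. Then the diameter of the difference graph D(G) equals 4 if and only if there exist a prime p, a Sylow p-subgroup P of G, and two distinct cyclic subgroups ⟨u⟩ and ⟨v⟩ of P of the same order, neither of which is a maximal cyclic subgroup of P. -/

import Mathlib

/-- Adjacency in the difference of the enhanced power graph and the power graph:
`⟨x, y⟩` is cyclic but neither of `x`, `y` is a power of the other. -/
def diffAdj {G : Type*} [Group G] (x y : G) : Prop :=
  IsCyclic (Subgroup.closure ({x, y} : Set G)) ∧
    (¬ ∃ k : ℤ, y = x ^ k) ∧ (¬ ∃ k : ℤ, x = y ^ k)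

/-- The vertex set of the difference graph `𝒟(G)`: the elements of `G` that are
non-isolated in the difference of the enhanced power graph and the power graph. -/
abbrev DiffVertex (G : Type*) [Group G] := {x : G // ∃ y, diffAdj x y}

/-- The difference graph `𝒟(G)` of a group `G`. -/
def diffGraph (G : Type*) [Group G] : SimpleGraph (DiffVertex G) :=
  SimpleGraph.fromRel (fun a b => diffAdj a.val b.val)

/-- A dominating set of a graph: every vertex is in `S` or adjacent to a vertex of `S`. -/
def IsDominatingSet {V : Type*} (Γ : SimpleGraph V) (S : Set V) : Prop :=
  ∀ v : V, v ∈ S ∨ ∃ u ∈ S, Γ.Adj u v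

/-- The domination number of a graph: the least size of a dominating set. -/
noncomputable def dominationNumber {V : Type*} (Γ : SimpleGraph V) : ℕ :=
  sInf {n : ℕ | ∃ S : Set V, IsDominatingSet Γ S ∧ S.ncard = n}

/-- A maximal cyclic subgroup: a cyclic subgroup not properly contained in
another cyclic subgroup. -/
def IsMaxCyclic {G : Type*} [Group G] (C : Subgroup G) : Prop :=
  IsCyclic C ∧ ∀ D : Subgroup G, IsCyclic D → C ≤ D → C = D

/-! Write an element as `u * b` with commuting factors `u` of `p`-power order and `b` of order
prime to `p`. In a nilpotent group `u * b` is adjacent to an element `w` of `p`-power order iff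
`⟨u⟩ < ⟨w⟩` and `b ≠ 1`, nontrivial elements of coprime orders are adjacent, and every vertex has a
neighbour of prime power order. So two vertices with such neighbours at different primes are at
distance at most `3`. If the neighbours `w` and `w'` belong to the same prime `p`, then either one
of them is adjacent to both vertices, or the `p`-parts of the vertices yield two cyclic subgroups
as in the theorem; in any case a nontrivial element of order prime to `p` is adjacent to `w` and
`w'`, so the distance is at most `4`.

Conversely, given such `⟨u⟩ ≠ ⟨v⟩`, choose `a` generating a maximal cyclic `p'`-subgroup. All
neighbours of `u * a` have `u` as a power, and all neighbours of `v * a` have `v` as a power, but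
no cyclic subgroup contains both `u` and `v`: hence `u * a` and `v * a` are at distance at least
`4`. -/

open Subgroup

section Cyclic

variable {G : Type*} [Group G]

theorem mem_zpowers_iff_orderOf_dvd {c x y : G} (hx : x ∈ zpowers c) (hy : y ∈ zpowers c)
    (hfin : IsOfFinOrder y) : x ∈ zpowers y ↔ orderOf x ∣ orderOf y := by
  refine ⟨orderOf_dvd_of_mem_zpowers, fun hdvd => ?_⟩
  obtain ⟨i, rfl⟩ := mem_zpowers_iff.mp hx
  obtain ⟨j, rfl⟩ := mem_zpowers_iff.mp hy
  -- `d` generates the subgroup generated by `x = c ^ i` and `y = c ^ j`.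
  let d := c ^ (Int.gcd i j : ℤ)
  have mem_d {k : ℤ} (hk : (Int.gcd i j : ℤ) ∣ k) : c ^ k ∈ zpowers d := by
    obtain ⟨m, rfl⟩ := hk
    exact ⟨m, (zpow_mul c _ m).symm⟩
  have hd_pow : d ^ orderOf (c ^ j) = 1 := by
    have hbezout : d = (c ^ i) ^ Int.gcdA i j * (c ^ j) ^ Int.gcdB i j := by
      simp only [d, Int.gcd_eq_gcd_ab, zpow_add, zpow_mul]
    have hcomm : Commute ((c ^ i) ^ Int.gcdA i j) ((c ^ j) ^ Int.gcdB i j) :=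
      ((Commute.refl c).zpow_zpow i j).zpow_zpow _ _
    rw [hbezout, hcomm.mul_pow, ← zpow_natCast, ← zpow_natCast, zpow_comm, zpow_comm (c ^ j),
      zpow_natCast, zpow_natCast, pow_orderOf_eq_one, orderOf_dvd_iff_pow_eq_one.mp hdvd,
      one_zpow, one_zpow, one_mul]
  have hd : IsOfFinOrder d := isOfFinOrder_iff_pow_eq_one.mpr ⟨_, hfin.orderOf_pos, hd_pow⟩
  have : Finite (zpowers d) := finite_zpowers.mpr hd
  have hzpowers : zpowers (c ^ j) = zpowers d := by
    refine eq_of_le_of_card_ge (zpowers_le.mpr (mem_d (Int.gcd_dvd_right i j))) ?_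
    rw [Nat.card_zpowers, Nat.card_zpowers]
    exact Nat.le_of_dvd hfin.orderOf_pos (orderOf_dvd_of_pow_eq_one hd_pow)
  exact hzpowers ▸ mem_d (Int.gcd_dvd_left i j)

theorem zpowers_eq_zpowers_of_orderOf_eq {c x y : G} (hx : x ∈ zpowers c) (hy : y ∈ zpowers c)
    (hfin : IsOfFinOrder x) (h : orderOf x = orderOf y) : zpowers x = zpowers y := by
  have hfin' : IsOfFinOrder y := orderOf_pos_iff.mp (h ▸ hfin.orderOf_pos)
  exact le_antisymm
    (zpowers_le.mpr ((mem_zpowers_iff_orderOf_dvd hx hy hfin').mpr h.dvd))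
    (zpowers_le.mpr ((mem_zpowers_iff_orderOf_dvd hy hx hfin).mpr h.symm.dvd))

theorem mem_zpowers_or_mem_zpowers_of_orderOf_eq_prime_pow {c u w : G} {p k l : ℕ}
    [hp : Fact p.Prime] (hu : u ∈ zpowers c) (hw : w ∈ zpowers c) (hu_ord : orderOf u = p ^ k)
    (hw_ord : orderOf w = p ^ l) : u ∈ zpowers w ∨ w ∈ zpowers u := by
  have isOfFinOrder {g : G} {n : ℕ} (hg : orderOf g = p ^ n) : IsOfFinOrder g :=
    orderOf_pos_iff.mp (hg ▸ pow_pos hp.out.pos n)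
  rw [mem_zpowers_iff_orderOf_dvd hu hw (isOfFinOrder hw_ord),
    mem_zpowers_iff_orderOf_dvd hw hu (isOfFinOrder hu_ord), hu_ord, hw_ord]
  exact (le_total k l).imp (pow_dvd_pow p) (pow_dvd_pow p)

theorem exists_mem_zpowers_orderOf_eq {x : G} {d : ℕ} (hx : IsOfFinOrder x)
    (hd : d ∣ orderOf x) : ∃ y ∈ zpowers x, orderOf y = d :=
  ⟨_, npow_mem_zpowers x _, orderOf_pow_orderOf_div hx.orderOf_pos.ne' hd⟩

theorem left_mem_zpowers_mul_of_coprime {a b : G} (hab : Commute a b)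
    (hco : (orderOf a).Coprime (orderOf b)) : a ∈ zpowers (a * b) := by
  have hpow : (a * b) ^ orderOf b = a ^ orderOf b := by
    rw [hab.mul_pow, pow_orderOf_eq_one, mul_one]
  have ha : a ∈ zpowers (a ^ orderOf b) := mem_zpowers_pow_iff.mpr hco.symm
  exact zpowers_le_of_mem (npow_mem_zpowers (a * b) (orderOf b)) (hpow ▸ ha)

theorem right_mem_zpowers_mul_of_coprime {a b : G} (hab : Commute a b)
    (hco : (orderOf a).Coprime (orderOf b)) : b ∈ zpowers (a * b) :=
  hab.eq ▸ left_mem_zpowers_mul_of_coprime hab.symm hco.symm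

theorem exists_prime_pow_mul_coprime_eq (p : ℕ) [hp : Fact p.Prime] {x : G}
    (hx : IsOfFinOrder x) :
    ∃ u b : G, ∃ k, Commute u b ∧ orderOf u = p ^ k ∧ p.Coprime (orderOf b) ∧ u * b = x := by
  obtain ⟨k, m, hm, hx_ord⟩ := Nat.exists_eq_pow_mul_and_not_dvd hx.orderOf_pos.ne' p hp.out.ne_one
  have hcop : p.Coprime m := (Nat.Prime.coprime_iff_not_dvd hp.out).mpr hm
  set s := (p ^ k).gcdA m
  set t := (p ^ k).gcdB m
  have hbezout : (m * t + p ^ k * s : ℤ) = 1 := by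
    have := Nat.gcd_eq_gcd_ab (p ^ k) m
    rw [(hcop.pow_left k).gcd_eq_one] at this
    push_cast at this
    linarith
  have hu_pow : (x ^ (m * t : ℤ)) ^ p ^ k = 1 := by
    rw [← zpow_natCast, ← zpow_mul, ← orderOf_dvd_iff_zpow_eq_one, hx_ord]
    exact ⟨t, by push_cast; ring⟩
  have hb_pow : (x ^ (p ^ k * s : ℤ)) ^ m = 1 := by
    rw [← zpow_natCast, ← zpow_mul, ← orderOf_dvd_iff_zpow_eq_one, hx_ord]
    exact ⟨s, by push_cast; ring⟩
  obtain ⟨j, -, hj⟩ := (Nat.dvd_prime_pow hp.out).mp (orderOf_dvd_of_pow_eq_one hu_pow)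
  exact ⟨_, _, j, (Commute.refl x).zpow_zpow _ _, hj,
    hcop.coprime_dvd_right (orderOf_dvd_of_pow_eq_one hb_pow),
    by rw [← zpow_add, hbezout, zpow_one]⟩

theorem mem_zpowers_of_maximalFor_coprime {p : ℕ} [Fact p.Prime] {a b c : G}
    (ha : MaximalFor (fun g : G => p.Coprime (orderOf g)) zpowers a) (hc : IsOfFinOrder c)
    (hac : a ∈ zpowers c) (hbc : b ∈ zpowers c) (hb : p.Coprime (orderOf b)) :
    b ∈ zpowers a := by
  obtain ⟨s, r, k, hsr, hs, hr, rfl⟩ := exists_prime_pow_mul_coprime_eq p hc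
  have hco : (orderOf s).Coprime (orderOf r) := hs ▸ hr.pow_left k
  have hr_mem : r ∈ zpowers (s * r) := right_mem_zpowers_mul_of_coprime hsr hco
  have mem_r {g : G} (hg : g ∈ zpowers (s * r)) (hg' : p.Coprime (orderOf g)) : g ∈ zpowers r := by
    have hdvd : orderOf g ∣ p ^ k * orderOf r := by
      rw [← hs, ← hsr.orderOf_mul_eq_mul_orderOf_of_coprime hco]
      exact orderOf_dvd_of_mem_zpowers hg
    exact (mem_zpowers_iff_orderOf_dvd hg hr_mem (hc.of_mem_zpowers hr_mem)).mpr
      ((hg'.pow_left k).symm.dvd_of_dvd_mul_left hdvd)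
  exact ha.2 hr (zpowers_le.mpr (mem_r hac ha.1)) (mem_r hbc hb)

end Cyclic

section DiffAdj

variable {G : Type*} [Group G]

theorem isCyclic_closure_pair_iff {x y : G} :
    IsCyclic (closure ({x, y} : Set G)) ↔ ∃ c, x ∈ zpowers c ∧ y ∈ zpowers c := by
  constructor
  · intro h
    obtain ⟨c, hc⟩ := (Subgroup.isCyclic_iff_exists_zpowers_eq_top _).mp h
    exact ⟨c, hc ▸ subset_closure (.inl rfl), hc ▸ subset_closure (.inr rfl)⟩
  · rintro ⟨c, hx, hy⟩
    exact isCyclic_of_le ((closure_le _).mpr (Set.pair_subset hx hy))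

theorem diffAdj_iff {x y : G} :
    diffAdj x y ↔ (∃ c, x ∈ zpowers c ∧ y ∈ zpowers c) ∧ y ∉ zpowers x ∧ x ∉ zpowers y := by
  simp only [diffAdj, isCyclic_closure_pair_iff, mem_zpowers_iff, eq_comm]

namespace diffAdj

theorem symm {x y : G} (h : diffAdj x y) : diffAdj y x := by
  obtain ⟨⟨c, hx, hy⟩, hyx, hxy⟩ := diffAdj_iff.mp h
  exact diffAdj_iff.mpr ⟨⟨c, hy, hx⟩, hxy, hyx⟩

theorem ne {x y : G} (h : diffAdj x y) : x ≠ y := by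
  rintro rfl
  exact (diffAdj_iff.mp h).2.1 (mem_zpowers x)

theorem right_ne_one {x y : G} (h : diffAdj x y) : y ≠ 1 := by
  rintro rfl
  exact (diffAdj_iff.mp h).2.1 (one_mem _)

theorem of_coprime {a b : G} (ha : a ≠ 1) (hb : b ≠ 1) (hab : Commute a b)
    (hco : (orderOf a).Coprime (orderOf b)) : diffAdj a b := by
  refine diffAdj_iff.mpr ⟨⟨a * b, left_mem_zpowers_mul_of_coprime hab hco,
    right_mem_zpowers_mul_of_coprime hab hco⟩, fun h => hb ?_, fun h => ha ?_⟩
  · exact orderOf_eq_one_iff.mp (hco.symm.eq_one_of_dvd (orderOf_dvd_of_mem_zpowers h))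
  · exact orderOf_eq_one_iff.mp (hco.eq_one_of_dvd (orderOf_dvd_of_mem_zpowers h))

theorem exists_orderOf_eq_prime_pow {x y : G} (h : diffAdj x y) (hx : IsOfFinOrder x)
    (hy : IsOfFinOrder y) : ∃ p k w, p.Prime ∧ orderOf w = p ^ k ∧ diffAdj x w := by
  obtain ⟨⟨c, hxc, hyc⟩, hyx, hxy⟩ := diffAdj_iff.mp h
  obtain ⟨p, k, hp, hpy, hpx⟩ : ∃ p k, p.Prime ∧ p ^ k ∣ orderOf y ∧ ¬ p ^ k ∣ orderOf x := by
    rw [mem_zpowers_iff_orderOf_dvd hyc hxc hx, Nat.dvd_iff_prime_pow_dvd_dvd] at hyx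
    push Not at hyx
    exact hyx
  obtain ⟨w, hwy, hw⟩ := exists_mem_zpowers_orderOf_eq hy hpy
  refine ⟨p, k, w, hp, hw, diffAdj_iff.mpr
    ⟨⟨c, hxc, zpowers_le_of_mem hyc hwy⟩, fun hwx => hpx ?_, fun hxw => hxy ?_⟩⟩
  · exact hw ▸ orderOf_dvd_of_mem_zpowers hwx
  · exact zpowers_le_of_mem hwy hxw

theorem zpowers_lt_of_mul {u b w : G} {p k l : ℕ} [Fact p.Prime] (h : diffAdj (u * b) w)
    (hub : Commute u b) (hu : orderOf u = p ^ k) (hb : p.Coprime (orderOf b))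
    (hw : orderOf w = p ^ l) : zpowers u < zpowers w ∧ b ≠ 1 := by
  obtain ⟨⟨c, hubc, hwc⟩, hw_notMem, hub_notMem⟩ := diffAdj_iff.mp h
  have hu_mem : u ∈ zpowers (u * b) := left_mem_zpowers_mul_of_coprime hub (hu ▸ hb.pow_left k)
  have hwu : w ∉ zpowers u := fun hwu => hw_notMem (zpowers_le_of_mem hu_mem hwu)
  have huw : u ∈ zpowers w := (mem_zpowers_or_mem_zpowers_of_orderOf_eq_prime_pow
    (zpowers_le_of_mem hubc hu_mem) hwc hu hw).resolve_right hwu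
  refine ⟨lt_iff_le_not_ge.mpr ⟨zpowers_le.mpr huw, fun hle => hwu (zpowers_le.mp hle)⟩, ?_⟩
  rintro rfl
  exact hub_notMem ((mul_one u).symm ▸ huw)

theorem mul_of_zpowers_lt {u b w : G} (hlt : zpowers u < zpowers w) (hw : IsOfFinOrder w)
    (hb : b ≠ 1) (hub : Commute u b) (hwb : Commute w b)
    (hco : (orderOf w).Coprime (orderOf b)) : diffAdj (u * b) w := by
  have huw : u ∈ zpowers w := zpowers_le.mp hlt.le
  have hco_u : (orderOf u).Coprime (orderOf b) :=
    hco.coprime_dvd_left (orderOf_dvd_of_mem_zpowers huw)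
  have hw_mem : w ∈ zpowers (w * b) := left_mem_zpowers_mul_of_coprime hwb hco
  have hub_mem : u * b ∈ zpowers (w * b) :=
    mul_mem (zpowers_le_of_mem hw_mem huw) (right_mem_zpowers_mul_of_coprime hwb hco)
  refine diffAdj_iff.mpr ⟨⟨w * b, hub_mem, hw_mem⟩, fun h => hlt.not_ge ?_, fun h => hb ?_⟩
  · have hdvd : orderOf w ∣ orderOf u * orderOf b :=
      hub.orderOf_mul_eq_mul_orderOf_of_coprime hco_u ▸ orderOf_dvd_of_mem_zpowers h
    exact zpowers_le.mpr ((mem_zpowers_iff_orderOf_dvd (mem_zpowers w) huw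
      (hw.of_mem_zpowers huw)).mpr (hco.dvd_of_dvd_mul_right hdvd))
  · have hbw : b ∈ zpowers w :=
      zpowers_le_of_mem h (right_mem_zpowers_mul_of_coprime hub hco_u)
    exact orderOf_eq_one_iff.mp (hco.symm.eq_one_of_dvd (orderOf_dvd_of_mem_zpowers hbw))

theorem mem_zpowers_of_mul_of_maximalFor {u a z : G} {p k : ℕ} [Fact p.Prime]
    (h : diffAdj (u * a) z) (hG : IsMulTorsion G) (hua : Commute u a)
    (hu : orderOf u = p ^ k)
    (ha : MaximalFor (fun g : G => p.Coprime (orderOf g)) zpowers a) : u ∈ zpowers z := by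
  obtain ⟨⟨c, huac, hzc⟩, hz_notMem, -⟩ := diffAdj_iff.mp h
  obtain ⟨s, b, l, hsb, hs, hb, rfl⟩ := exists_prime_pow_mul_coprime_eq p (hG z)
  have hco_ua : (orderOf u).Coprime (orderOf a) := hu ▸ ha.1.pow_left k
  have hco_sb : (orderOf s).Coprime (orderOf b) := hs ▸ hb.pow_left l
  have hu_mem : u ∈ zpowers (u * a) := left_mem_zpowers_mul_of_coprime hua hco_ua
  have ha_mem : a ∈ zpowers (u * a) := right_mem_zpowers_mul_of_coprime hua hco_ua
  have hs_mem : s ∈ zpowers (s * b) := left_mem_zpowers_mul_of_coprime hsb hco_sb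
  have hb_mem : b ∈ zpowers (s * b) := right_mem_zpowers_mul_of_coprime hsb hco_sb
  have hba : b ∈ zpowers a := mem_zpowers_of_maximalFor_coprime ha (hG c)
    (zpowers_le_of_mem huac ha_mem) (zpowers_le_of_mem hzc hb_mem) hb
  rcases mem_zpowers_or_mem_zpowers_of_orderOf_eq_prime_pow (zpowers_le_of_mem huac hu_mem)
    (zpowers_le_of_mem hzc hs_mem) hu hs with hus | hsu
  · exact zpowers_le_of_mem hs_mem hus
  · exact absurd (mul_mem (zpowers_le_of_mem hu_mem hsu) (zpowers_le_of_mem ha_mem hba)) hz_notMem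

end diffAdj

/-- The elements `u` and `v` of `H` generate distinct cyclic subgroups of the same order, neither
of which is a maximal cyclic subgroup of `H`. Nonmaximality of `⟨u⟩` is expressed by a strictly
larger cyclic subgroup `⟨w⟩` of `H`. -/
def IsNonmaximalPair (H : Subgroup G) (u v : G) : Prop :=
  u ∈ H ∧ v ∈ H ∧ zpowers u ≠ zpowers v ∧ orderOf u = orderOf v ∧
    (∃ w ∈ H, zpowers u < zpowers w) ∧ (∃ w ∈ H, zpowers v < zpowers w)

theorem zpowers_lt_or_exists_isNonmaximalPair {H : Subgroup G} {u v w w' : G} (hw : w ∈ H)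
    (hw' : w' ∈ H) (huw : zpowers u < zpowers w) (hvw' : zpowers v < zpowers w')
    (hv : IsOfFinOrder v) (hdvd : orderOf u ∣ orderOf v) :
    zpowers u < zpowers w' ∨ ∃ v', IsNonmaximalPair H u v' := by
  obtain ⟨v', hv'v, hv'⟩ := exists_mem_zpowers_orderOf_eq hv hdvd
  have hv'w' : zpowers v' < zpowers w' := (zpowers_le.mpr hv'v).trans_lt hvw'
  by_cases heq : zpowers u = zpowers v'
  · exact .inl (heq ▸ hv'w')
  · exact .inr ⟨v', zpowers_le_of_mem hw (zpowers_le.mp huw.le),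
      zpowers_le_of_mem hw' (zpowers_le.mp hv'w'.le), heq, hv'.symm, ⟨w, hw, huw⟩, ⟨w', hw', hv'w'⟩⟩

end DiffAdj

section NotPrimePow

variable {G : Type*} [Group G] [Finite G] [Nontrivial G]

theorem exists_ne_one_coprime_orderOf (hpp : ¬ IsPrimePow (Nat.card G)) {p : ℕ} (hp : p.Prime) :
    ∃ t : G, t ≠ 1 ∧ p.Coprime (orderOf t) := by
  obtain ⟨q, hq, hqG, hqp⟩ : ∃ q : ℕ, q.Prime ∧ q ∣ Nat.card G ∧ q ≠ p := by
    by_contra! hunique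
    obtain ⟨r, hr, hrG⟩ := Nat.exists_prime_and_dvd (Finite.one_lt_card (α := G)).ne'
    refine hpp (isPrimePow_iff_unique_prime_dvd.mpr ⟨r, ⟨hr, hrG⟩, fun q hq => ?_⟩)
    rw [hunique q hq.1 hq.2, hunique r hr hrG]
  have := Fact.mk hq
  obtain ⟨t, ht⟩ := exists_prime_orderOf_dvd_card' q hqG
  refine ⟨t, fun h => hq.ne_one ?_, ?_⟩
  · rw [← ht, h, orderOf_one]
  · rw [ht, Nat.coprime_primes hp hq]
    exact hqp.symm

theorem exists_maximalFor_zpowers_coprime (hpp : ¬ IsPrimePow (Nat.card G)) {p : ℕ}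
    (hp : p.Prime) :
    ∃ a : G, a ≠ 1 ∧ MaximalFor (fun g : G => p.Coprime (orderOf g)) zpowers a := by
  obtain ⟨a, ha⟩ := (Set.toFinite {g : G | p.Coprime (orderOf g)}).exists_maximalFor zpowers _
    ⟨1, by simp⟩
  refine ⟨a, ?_, ha⟩
  rintro rfl
  obtain ⟨t, ht1, ht⟩ := exists_ne_one_coprime_orderOf hpp hp
  have hle : zpowers t ≤ zpowers (1 : G) := ha.2 ht (by simp)
  exact ht1 (by simpa using hle)

end NotPrimePow

section Nilpotent

variable {G : Type*} [Group G] [Finite G] [Group.IsNilpotent G]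

theorem commute_of_coprime_orderOf {a b : G} (hco : (orderOf a).Coprime (orderOf b)) :
    Commute a b := by
  obtain ⟨e⟩ : Nonempty
      ((∀ p : (Nat.card G).primeFactors, ∀ P : Sylow p G, (P : Subgroup G)) ≃* G) :=
    (Group.isNilpotent_of_finite_tfae.out 0 4).mp ‹_›
  suffices h : ∀ p P, Commute (e.symm a p P) (e.symm b p P) by
    have hcomm : Commute (e.symm a) (e.symm b) :=
      Pi.commute_iff.mpr fun p => Pi.commute_iff.mpr (h p)
    simpa only [MulEquiv.apply_symm_apply] using hcomm.map e
  intro p P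
  have := Fact.mk (Nat.prime_of_mem_primeFactors p.2)
  have orderOf_dvd (g : G) : orderOf (e.symm g p P) ∣ orderOf g := orderOf_dvd_of_pow_eq_one <| by
    rw [← Pi.pow_apply, ← Pi.pow_apply, ← map_pow, pow_orderOf_eq_one, map_one, Pi.one_apply,
      Pi.one_apply]
  have hco' := (hco.coprime_dvd_left (orderOf_dvd a)).coprime_dvd_right (orderOf_dvd b)
  obtain ⟨k, hk⟩ := IsPGroup.iff_orderOf.mp P.2 (e.symm a p P)
  obtain ⟨l, hl⟩ := IsPGroup.iff_orderOf.mp P.2 (e.symm b p P)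
  rcases le_total k l with hkl | hlk
  · have ha : e.symm a p P = 1 := orderOf_eq_one_iff.mp
      (hco'.eq_one_of_dvd (hk ▸ hl ▸ pow_dvd_pow p.1 hkl))
    exact ha.symm ▸ Commute.one_left _
  · have hb : e.symm b p P = 1 := orderOf_eq_one_iff.mp
      (hco'.symm.eq_one_of_dvd (hk ▸ hl ▸ pow_dvd_pow p.1 hlk))
    exact hb.symm ▸ Commute.one_right _

theorem mem_sylow_iff_exists_orderOf_eq_pow {p : ℕ} [hp : Fact p.Prime] (P : Sylow p G) {g : G} :
    g ∈ (P : Subgroup G) ↔ ∃ k, orderOf g = p ^ k := by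
  constructor
  · intro hg
    simpa only [Subgroup.orderOf_mk] using IsPGroup.iff_orderOf.mp P.2 ⟨g, hg⟩
  · rintro ⟨k, hk⟩
    obtain ⟨Q, hQ⟩ := (IsPGroup.of_card (G := zpowers g) (Nat.card_zpowers g ▸ hk)).exists_le_sylow
    have := Sylow.unique_of_normal P inferInstance
    exact Subsingleton.elim Q P ▸ zpowers_le.mp hQ

theorem diffAdj_or_diffAdj_or_exists_isNonmaximalPair {p k l : ℕ} [hp : Fact p.Prime]
    (P : Sylow p G) {x y w w' : G} (hxw : diffAdj x w) (hyw' : diffAdj y w')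
    (hw : orderOf w = p ^ k) (hw' : orderOf w' = p ^ l) :
    diffAdj x w' ∨ diffAdj y w ∨ ∃ u v, IsNonmaximalPair (P : Subgroup G) u v := by
  obtain ⟨u, b, i, hub, hu, hb, rfl⟩ :=
    exists_prime_pow_mul_coprime_eq p (isOfFinOrder_of_finite x)
  obtain ⟨v, d, j, hvd, hv, hd, rfl⟩ :=
    exists_prime_pow_mul_coprime_eq p (isOfFinOrder_of_finite y)
  obtain ⟨huw, hb1⟩ := hxw.zpowers_lt_of_mul hub hu hb hw
  obtain ⟨hvw', hd1⟩ := hyw'.zpowers_lt_of_mul hvd hv hd hw'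
  have hwP := (mem_sylow_iff_exists_orderOf_eq_pow P).mpr ⟨k, hw⟩
  have hw'P := (mem_sylow_iff_exists_orderOf_eq_pow P).mpr ⟨l, hw'⟩
  rcases le_total i j with hij | hji
  · have hdvd : orderOf u ∣ orderOf v := hu ▸ hv ▸ pow_dvd_pow p hij
    rcases zpowers_lt_or_exists_isNonmaximalPair hwP hw'P huw hvw' (isOfFinOrder_of_finite v) hdvd
      with hlt | hpair
    · have hco : (orderOf w').Coprime (orderOf b) := hw' ▸ hb.pow_left l
      exact .inl (.mul_of_zpowers_lt hlt (isOfFinOrder_of_finite w') hb1 hub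
        (commute_of_coprime_orderOf hco) hco)
    · exact .inr (.inr ⟨u, hpair⟩)
  · have hdvd : orderOf v ∣ orderOf u := hu ▸ hv ▸ pow_dvd_pow p hji
    rcases zpowers_lt_or_exists_isNonmaximalPair hw'P hwP hvw' huw (isOfFinOrder_of_finite u) hdvd
      with hlt | hpair
    · have hco : (orderOf w).Coprime (orderOf d) := hw ▸ hd.pow_left k
      exact .inr (.inl (.mul_of_zpowers_lt hlt (isOfFinOrder_of_finite w) hd1 hvd
        (commute_of_coprime_orderOf hco) hco))
    · exact .inr (.inr ⟨v, hpair⟩)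

end Nilpotent

section DiffGraph

theorem exists_adj_or_eq_of_edist_le_three {V : Type*} {Γ : SimpleGraph V} {x y : V}
    (h : Γ.edist x y ≤ 3) :
    ∃ x' y', (x = x' ∨ Γ.Adj x x') ∧ (y = y' ∨ Γ.Adj y y') ∧ (x' = y' ∨ Γ.Adj x' y') := by
  obtain ⟨W, hW⟩ := SimpleGraph.exists_walk_of_edist_ne_top (ne_top_of_le_ne_top (by decide) h)
  have hlen : W.length ≤ 3 := by
    rw [← hW] at h
    exact_mod_cast h
  match W, hlen with
  | .nil, _ => exact ⟨x, x, .inl rfl, .inl rfl, .inl rfl⟩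
  | .cons h₁ .nil, _ => exact ⟨x, y, .inl rfl, .inl rfl, .inr h₁⟩
  | .cons h₁ (.cons h₂ .nil), _ => exact ⟨_, y, .inr h₁, .inl rfl, .inr h₂⟩
  | .cons h₁ (.cons h₂ (.cons h₃ .nil)), _ => exact ⟨_, _, .inr h₁, .inr h₃.symm, .inr h₂⟩

variable {G : Type*} [Group G]

theorem diffGraph_adj {x y : DiffVertex G} : (diffGraph G).Adj x y ↔ diffAdj x.1 y.1 := by
  rw [diffGraph, SimpleGraph.fromRel_adj]
  exact ⟨fun h => h.2.elim id diffAdj.symm, fun h => ⟨fun hxy => h.ne (congrArg _ hxy), .inl h⟩⟩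

variable [Finite G]

theorem exists_diffGraph_adj_orderOf_eq_prime_pow (x : DiffVertex G) :
    ∃ p k, p.Prime ∧ ∃ w, (diffGraph G).Adj x w ∧ orderOf w.1 = p ^ k := by
  obtain ⟨y, hxy⟩ := x.2
  obtain ⟨p, k, w, hp, hw, hxw⟩ :=
    hxy.exists_orderOf_eq_prime_pow (isOfFinOrder_of_finite _) (isOfFinOrder_of_finite _)
  exact ⟨p, k, hp, ⟨w, _, hxw.symm⟩, diffGraph_adj.mpr hxw, hw⟩

variable [Group.IsNilpotent G]

theorem edist_le_three_of_coprime {x y w w' : DiffVertex G} (hxw : (diffGraph G).Adj x w)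
    (hyw' : (diffGraph G).Adj y w') (hco : (orderOf w.1).Coprime (orderOf w'.1)) :
    (diffGraph G).edist x y ≤ 3 := by
  have hww' : (diffGraph G).Adj w w' := diffGraph_adj.mpr <|
    .of_coprime (diffGraph_adj.mp hxw).right_ne_one (diffGraph_adj.mp hyw').right_ne_one
      (commute_of_coprime_orderOf hco) hco
  exact (SimpleGraph.Walk.cons hxw (.cons hww' (.cons hyw'.symm .nil))).edist_le

theorem edist_le_three_of_forall_not_isNonmaximalPair
    (hpairs : ∀ p : ℕ, p.Prime → ∀ (P : Sylow p G) (u v : G),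
      ¬ IsNonmaximalPair (P : Subgroup G) u v) (x y : DiffVertex G) :
    (diffGraph G).edist x y ≤ 3 := by
  obtain ⟨p, k, hp, w, hxw, hw⟩ := exists_diffGraph_adj_orderOf_eq_prime_pow x
  obtain ⟨q, l, hq, w', hyw', hw'⟩ := exists_diffGraph_adj_orderOf_eq_prime_pow y
  rcases eq_or_ne p q with rfl | hpq
  · have := Fact.mk hp
    suffices ∃ z, (diffGraph G).Adj x z ∧ (diffGraph G).Adj y z by
      obtain ⟨z, hxz, hyz⟩ := this
      exact (SimpleGraph.Walk.cons hxz (.cons hyz.symm .nil)).edist_le.trans (by norm_num)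
    have P : Sylow p G := default
    rcases diffAdj_or_diffAdj_or_exists_isNonmaximalPair P (diffGraph_adj.mp hxw)
      (diffGraph_adj.mp hyw') hw hw' with hxw' | hyw | ⟨u, v, huv⟩
    · exact ⟨w', diffGraph_adj.mpr hxw', hyw'⟩
    · exact ⟨w, hxw, diffGraph_adj.mpr hyw⟩
    · exact absurd huv (hpairs p hp P u v)
  · refine edist_le_three_of_coprime hxw hyw' ?_
    rw [hw, hw']
    exact Nat.coprime_pow_primes k l hp hq hpq

theorem mem_zpowers_of_eq_or_diffGraph_adj {p k : ℕ} [Fact p.Prime] {x z : DiffVertex G} {u a : G}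
    (hxz : x = z ∨ (diffGraph G).Adj x z) (hx : x.1 = u * a) (hu : orderOf u = p ^ k)
    (ha : MaximalFor (fun g : G => p.Coprime (orderOf g)) zpowers a) : u ∈ zpowers z.1 := by
  have hco : (orderOf u).Coprime (orderOf a) := hu ▸ ha.1.pow_left k
  have hua : Commute u a := commute_of_coprime_orderOf hco
  rcases hxz with rfl | hadj
  · exact hx ▸ left_mem_zpowers_mul_of_coprime hua hco
  · exact (hx ▸ diffGraph_adj.mp hadj).mem_zpowers_of_mul_of_maximalFor isMulTorsion_of_finite
      hua hu ha

variable [Nontrivial G]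

theorem edist_le_four (hpp : ¬ IsPrimePow (Nat.card G)) (x y : DiffVertex G) :
    (diffGraph G).edist x y ≤ 4 := by
  obtain ⟨p, k, hp, w, hxw, hw⟩ := exists_diffGraph_adj_orderOf_eq_prime_pow x
  obtain ⟨q, l, hq, w', hyw', hw'⟩ := exists_diffGraph_adj_orderOf_eq_prime_pow y
  rcases eq_or_ne p q with rfl | hpq
  · obtain ⟨t, ht1, ht⟩ := exists_ne_one_coprime_orderOf hpp hp
    have diffAdj_t {z s : DiffVertex G} {n : ℕ} (hzs : (diffGraph G).Adj z s)
        (hs : orderOf s.1 = p ^ n) : diffAdj s.1 t :=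
      have hco : (orderOf s.1).Coprime (orderOf t) := hs ▸ ht.pow_left n
      .of_coprime (diffGraph_adj.mp hzs).right_ne_one ht1 (commute_of_coprime_orderOf hco) hco
    let t' : DiffVertex G := ⟨t, w.1, (diffAdj_t hxw hw).symm⟩
    have hwt : (diffGraph G).Adj w t' := diffGraph_adj.mpr (diffAdj_t hxw hw)
    have hw't : (diffGraph G).Adj w' t' := diffGraph_adj.mpr (diffAdj_t hyw' hw')
    exact (SimpleGraph.Walk.cons hxw (.cons hwt (.cons hw't.symm (.cons hyw'.symm .nil)))).edist_le
  · refine (edist_le_three_of_coprime hxw hyw' ?_).trans (by norm_num)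
    rw [hw, hw']
    exact Nat.coprime_pow_primes k l hp hq hpq

theorem exists_three_lt_edist_of_isNonmaximalPair (hpp : ¬ IsPrimePow (Nat.card G)) {p : ℕ}
    [hp : Fact p.Prime] {P : Sylow p G} {u v : G}
    (huv : IsNonmaximalPair (P : Subgroup G) u v) :
    ∃ x y, 3 < (diffGraph G).edist x y := by
  obtain ⟨hu, hv, hne, hord, ⟨w, hw, huw⟩, ⟨w', hw', hvw'⟩⟩ := huv
  obtain ⟨a, ha1, ha⟩ := exists_maximalFor_zpowers_coprime hpp hp.out
  have coprime_a {s : G} (hs : s ∈ (P : Subgroup G)) : (orderOf s).Coprime (orderOf a) := by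
    obtain ⟨k, hk⟩ := (mem_sylow_iff_exists_orderOf_eq_pow P).mp hs
    exact hk ▸ ha.1.pow_left k
  have diffAdj_mul_a {s t : G} (hs : s ∈ (P : Subgroup G)) (ht : t ∈ (P : Subgroup G))
      (hst : zpowers s < zpowers t) : diffAdj (s * a) t :=
    .mul_of_zpowers_lt hst (isOfFinOrder_of_finite t) ha1
      (commute_of_coprime_orderOf (coprime_a hs)) (commute_of_coprime_orderOf (coprime_a ht))
      (coprime_a ht)
  refine ⟨⟨u * a, w, diffAdj_mul_a hu hw huw⟩, ⟨v * a, w', diffAdj_mul_a hv hw' hvw'⟩,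
    not_le.mp fun hle => ?_⟩
  obtain ⟨x, y, hx, hy, hxy⟩ := exists_adj_or_eq_of_edist_le_three hle
  obtain ⟨k, hu_ord⟩ := (mem_sylow_iff_exists_orderOf_eq_pow P).mp hu
  have hux : u ∈ zpowers x.1 := mem_zpowers_of_eq_or_diffGraph_adj hx rfl hu_ord ha
  have hvy : v ∈ zpowers y.1 := mem_zpowers_of_eq_or_diffGraph_adj hy rfl (hord ▸ hu_ord) ha
  obtain ⟨c, hxc, hyc⟩ : ∃ c, x.1 ∈ zpowers c ∧ y.1 ∈ zpowers c := by
    rcases hxy with rfl | hadj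
    · exact ⟨x.1, mem_zpowers _, mem_zpowers _⟩
    · exact (diffAdj_iff.mp (diffGraph_adj.mp hadj)).1
  exact hne (zpowers_eq_zpowers_of_orderOf_eq (zpowers_le_of_mem hxc hux)
    (zpowers_le_of_mem hyc hvy) (isOfFinOrder_of_finite u) hord)

end DiffGraph

theorem nilpotent_diffGraph_diam_eq_four_iff_general
    (G : Type*) [Group G] [Finite G] [Nontrivial G] (hnil : Group.IsNilpotent G)
    (hpp : ¬ IsPrimePow (Nat.card G)) :
    (diffGraph G).diam = 4 ↔
      ∃ (p : ℕ), p.Prime ∧ ∃ (P : Sylow p G) (u v : G),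
        IsNonmaximalPair (P : Subgroup G) u v := by
  have hle : (diffGraph G).ediam ≤ 4 := SimpleGraph.ediam_le_of_edist_le (edist_le_four hpp)
  have hcoe : ((diffGraph G).diam : ℕ∞) = (diffGraph G).ediam :=
    ENat.natCast_toNat (ne_top_of_le_ne_top (by decide) hle)
  constructor
  · intro hdiam
    by_contra! hpairs
    have hle_three : (diffGraph G).ediam ≤ 3 :=
      SimpleGraph.ediam_le_of_edist_le (edist_le_three_of_forall_not_isNonmaximalPair hpairs)
    rw [← hcoe, hdiam] at hle_three
    exact absurd hle_three (by decide)
  · rintro ⟨p, hp, P, u, v, huv⟩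
    have := Fact.mk hp
    obtain ⟨x, y, hxy⟩ := exists_three_lt_edist_of_isNonmaximalPair hpp huv
    have hlt : 3 < (diffGraph G).ediam := hxy.trans_le SimpleGraph.edist_le_ediam
    rw [← hcoe] at hle hlt
    exact le_antisymm (by exact_mod_cast hle) (by exact_mod_cast hlt)

/-- Lemma 5.7 (first part): for a finite non-cyclic nilpotent group `G` whose order is
not a prime power, `diam(𝒟(G)) = 4` iff some Sylow `p`-subgroup `P` of `G` contains two
distinct cyclic subgroups `⟨u⟩ ≠ ⟨v⟩` of the same order, neither of which is a maximal
cyclic subgroup of `P`. -/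
theorem nilpotent_diffGraph_diam_eq_four_iff
    (G : Type*) [Group G] [Finite G] (hnil : Group.IsNilpotent G)
    (hnc : ¬ IsCyclic G) (hpp : ¬ IsPrimePow (Nat.card G)) :
    (diffGraph G).diam = 4 ↔
      ∃ (p : ℕ), p.Prime ∧ ∃ (P : Sylow p G) (u v : G),
        u ∈ (P : Subgroup G) ∧ v ∈ (P : Subgroup G) ∧
        Subgroup.zpowers u ≠ Subgroup.zpowers v ∧ orderOf u = orderOf v ∧
        (∃ w ∈ (P : Subgroup G), Subgroup.zpowers u < Subgroup.zpowers w) ∧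
        (∃ w ∈ (P : Subgroup G), Subgroup.zpowers v < Subgroup.zpowers w) := by
  have := Nontrivial.of_not_isCyclic hnc
  exact nilpotent_diffGraph_diam_eq_four_iff_general G hnil hpp
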